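/- Let X̄ be a proper metric space, X ⊆ X̄ a nonempty closed subset, t_* ∈ ℝ ∪ {−∞}, Ω = X × (t_*, ∞), and let ψ̄ be a monotonic function with induced function ψ. Let F = (Λ, R_λ, s_λ) be a nested and discrete family of resonant sets in X̄ whose associated sets are Borel, and let μ be a locally finite Borel measure with supp(μ) = X. Assume: (i) (Ω, ψ) is d_*-separating with respect to F; (ii) (Ω, ψ, μ) satisfies a power law: there are τ, c₁, c₂ > 0 with c₁ e^{−τt} ≤ μ(ψ(x, t)) ≤ c₂ e^{−τt} for all (x, t) ∈ Ω; (iii) (Ω, ψ, μ) is f-decaying with respect to F for a function f : [0, ∞] × ℝ → [0, ∞), nondecreasing in the first and nonincreasing in the second argument, which is (d_*, b_*, 1, 0)-decaying, i.e. there exists c₀ < 1 with f(b + d_*, b − 2 d_*) ≤ c₀ for all b > b_*; (iv) every nonempty open U ⊆ X contains a set ψ(x, t) for some (x, t) ∈ Ω, and there exist C, σ > 0 with diam(ψ(x, t)) ≤ C e^{−σt} for all (x, t) ∈ Ω. Then for every nonempty open U ⊆ X, the Hausdorff dimension of Bad(F) ∩ U is at least d_μ(U). -/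

import Mathlib

open Metric Set MeasureTheory Filter

/-!
At every scale `b`, the decay condition and the power law leave inside each formal ball `ψ(x, t)`
about `exp(τ b)` disjoint formal balls at time `t + b` that avoid the neighbourhood, at the same
time, of the points which become resonant between the times `t - b` and `t + d`. Iterating from
one formal ball contained in `U` gives a Cantor set of points that are badly approximable, with
constant `2b`. Choosing only `N ≥ exp((τ - σ η) b)` children, where `η > 0` absorbs the constants
once `b` is large, the Cantor set carries the image `ν` of a uniform Bernoulli measure. A ball of
radius `r` comparable to the diameter bound at generation `n` meets disjoint sets of generation
`n` lying in the ball of radius `2r`, each of `μ`-measure at least a constant times `exp(-τ b n)`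
and of weight `N ^ (-n)`. Hence `ν(B(x, r)) ≲ r^(-η) μ(B(x, 2r))`, and the mass distribution
principle bounds the dimension below by the lower local dimension of `μ` minus `η`, where `η` is
arbitrary.
-/

section LocalDimension

open scoped ENNReal NNReal Topology

variable {E : Type*} [MeasurableSpace E]

theorem measure_inter_le_of_measure_closedBall_le [PseudoMetricSpace E] {ν : Measure E}
    {A T : Set E} {s M r₀ : ℝ} (hs : 0 ≤ s)
    (hν : ∀ x ∈ A, ∀ r ∈ Ioo 0 r₀, ν (closedBall x r) ≤ ENNReal.ofReal (M * r ^ s))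
    (hT : Bornology.IsBounded T) (hTr : diam T < r₀) :
    ν (T ∩ A) ≤ ENNReal.ofReal (M * diam T ^ s) := by
  rcases (T ∩ A).eq_empty_or_nonempty with hempty | ⟨x, hxT, hxA⟩
  · simp [hempty]
  have hlim : Tendsto (fun r : ℝ => ENNReal.ofReal (M * r ^ s)) (𝓝[>] diam T)
      (𝓝 (ENNReal.ofReal (M * diam T ^ s))) :=
    (ENNReal.tendsto_ofReal (((Real.continuous_rpow_const hs).tendsto _).const_mul M)).mono_left
      nhdsWithin_le_nhds
  refine ge_of_tendsto hlim ?_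
  filter_upwards [Ioo_mem_nhdsGT hTr] with r hr
  have hball : T ∩ A ⊆ closedBall x r := fun y hy =>
    (dist_le_diam_of_mem hT hy.1 hxT).trans hr.1.le
  exact (measure_mono hball).trans (hν x hxA r ⟨diam_nonneg.trans_lt hr.1, hr.2⟩)

theorem le_dimH_of_measure_closedBall_le [MetricSpace E] [BorelSpace E] {ν : Measure E}
    {A : Set E} (hA : ν A ≠ 0) {s : ℝ≥0} {M r₀ : ℝ} (hr₀ : 0 < r₀)
    (hν : ∀ x ∈ A, ∀ r ∈ Ioo 0 r₀, ν (closedBall x r) ≤ ENNReal.ofReal (M * r ^ (s : ℝ))) :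
    (s : ℝ≥0∞) ≤ dimH A := by
  set K : ℝ≥0 := max M.toNNReal 1
  have hMK : M ≤ K := (Real.le_coe_toNNReal M).trans (NNReal.coe_le_coe.2 (le_max_left _ _))
  have hK : (K : ℝ≥0∞) ≠ 0 := by simp [K]
  have hle : (K : ℝ≥0∞)⁻¹ • ν.restrict A ≤ μH[(s : ℝ)] := by
    refine Measure.le_hausdorffMeasure _ _ (ENNReal.ofReal (r₀ / 2))
      (by simpa using hr₀) fun S hS => ?_
    rw [← ediam_closure] at hS ⊢
    set T := closure S
    have hfin : ediam T ≠ ∞ := ne_top_of_le_ne_top ENNReal.ofReal_ne_top hS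
    have hdiam : diam T < r₀ :=
      (ENNReal.toReal_le_of_le_ofReal (by positivity) hS).trans_lt (half_lt_self hr₀)
    calc (K : ℝ≥0∞)⁻¹ * ν.restrict A S
        ≤ (K : ℝ≥0∞)⁻¹ * ν.restrict A T := by gcongr; exact subset_closure
      _ = (K : ℝ≥0∞)⁻¹ * ν (T ∩ A) := by
        rw [Measure.restrict_apply isClosed_closure.measurableSet]
      _ ≤ (K : ℝ≥0∞)⁻¹ * ENNReal.ofReal (K * diam T ^ (s : ℝ)) := by
        gcongr
        exact (measure_inter_le_of_measure_closedBall_le s.2 hν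
          (isBounded_iff_ediam_ne_top.2 hfin) hdiam).trans
          (ENNReal.ofReal_le_ofReal (mul_le_mul_of_nonneg_right hMK (by positivity)))
      _ = ediam T ^ (s : ℝ) := by
        rw [ENNReal.ofReal_mul K.coe_nonneg,
          ← ENNReal.ofReal_rpow_of_nonneg diam_nonneg s.coe_nonneg, diam,
          ENNReal.ofReal_toReal hfin, ENNReal.ofReal_coe_nnreal,
          ENNReal.inv_mul_cancel_left hK ENNReal.coe_ne_top]
  refine le_dimH_of_hausdorffMeasure_ne_zero fun hzero => hA ?_
  have hleA := hle A
  simpa [hzero, hK] using hleA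

/-- The lower local dimension of `μ` at `x`, as a real number. It takes the junk value `0` where
the lower limit is `-∞` or `∞`. -/
noncomputable def lowerLocalDim [PseudoMetricSpace E] (μ : Measure E) (x : E) : ℝ :=
  liminf (fun r : ℝ => Real.log (μ (ball x r)).toReal / Real.log r) (𝓝[>] 0)

theorem eventually_measure_ball_le_rpow [PseudoMetricSpace E] {μ : Measure E}
    [IsLocallyFiniteMeasure μ] {x : E} {α : ℝ} (hα : 0 ≤ α) (h : α < lowerLocalDim μ x) :
    ∀ᶠ r in 𝓝[>] 0, μ (ball x r) ≤ ENNReal.ofReal (r ^ α) := by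
  rw [lowerLocalDim, liminf_eq] at h
  obtain ⟨β, hβ, hαβ⟩ := exists_lt_of_lt_csSup (by
    by_contra hempty
    rw [not_nonempty_iff_eq_empty.1 hempty, Real.sSup_empty] at h
    exact h.not_ge hα) h
  obtain ⟨R, hR, hfin⟩ := (μ.finiteAt_nhds x).exists_mem_basis nhds_basis_ball
  filter_upwards [hβ, Ioo_mem_nhdsGT one_pos, Ioo_mem_nhdsGT hR] with r hβr ⟨hr, hr1⟩ ⟨_, hrR⟩
  have hfin_r : μ (ball x r) ≠ ∞ := measure_ne_top_of_subset (ball_subset_ball hrR.le) hfin.ne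
  rw [← ENNReal.ofReal_toReal hfin_r]
  refine ENNReal.ofReal_le_ofReal ?_
  rcases (ENNReal.toReal_nonneg (a := μ (ball x r))).eq_or_lt with hzero | hpos
  · exact hzero ▸ Real.rpow_nonneg hr.le α
  have hlog := Real.log_neg hr hr1
  rw [le_div_iff_of_neg hlog] at hβr
  rw [← Real.log_le_log_iff hpos (by positivity), Real.log_rpow hr]
  exact hβr.trans (mul_le_mul_of_nonpos_right hαβ.le hlog.le)

theorem exists_measure_setOf_forall_Ioo_ne_zero {ν : Measure E} {A : Set E} (hA : ν A ≠ 0)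
    {p : E → ℝ → Prop} (h : ∀ x ∈ A, ∀ᶠ r in 𝓝[>] 0, p x r) :
    ∃ r₀ > 0, ν {x ∈ A | ∀ r ∈ Ioo 0 r₀, p x r} ≠ 0 := by
  by_contra! hnull
  refine hA (measure_mono_null (t := ⋃ k : ℕ, {x ∈ A | ∀ r ∈ Ioo 0 (1 / (k + 1 : ℝ)), p x r})
    (fun x hx => ?_) (measure_iUnion_null fun k => hnull _ (by positivity)))
  obtain ⟨δ, hδ, hp⟩ := mem_nhdsGT_iff_exists_Ioo_subset.1 (h x hx)
  obtain ⟨k, hk⟩ := exists_nat_one_div_lt (mem_Ioi.1 hδ)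
  exact mem_iUnion.2 ⟨k, hx, fun r hr => hp ⟨hr.1, hr.2.trans hk⟩⟩

theorem le_dimH_of_measure_closedBall_le_rpow_neg_mul [MetricSpace E] [BorelSpace E]
    {μ ν : Measure E} [IsLocallyFiniteMeasure μ] {A : Set E} (hA : ν A ≠ 0) {M r₀ η : ℝ}
    (hM : 0 ≤ M) (hη : 0 ≤ η) (hr₀ : 0 < r₀)
    (hν : ∀ x ∈ A, ∀ r ∈ Ioo 0 r₀,
      ν (closedBall x r) ≤ ENNReal.ofReal (M * r ^ (-η)) * μ (closedBall x (2 * r)))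
    {s : ℝ≥0} (hμ : ∀ x ∈ A, s + η < lowerLocalDim μ x) :
    (s : ℝ≥0∞) ≤ dimH A := by
  obtain ⟨r₁, hr₁, hA'⟩ := exists_measure_setOf_forall_Ioo_ne_zero hA fun x hx =>
    eventually_measure_ball_le_rpow (by positivity) (hμ x hx)
  refine (le_dimH_of_measure_closedBall_le hA' (M := M * 3 ^ (s + η))
    (lt_min hr₀ (div_pos hr₁ three_pos)) ?_).trans (dimH_mono (sep_subset _ _))
  rintro x ⟨hxA, hx⟩ r ⟨hr, hrlt⟩
  obtain ⟨hr_r₀, hr_r₁⟩ := lt_min_iff.1 hrlt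
  calc ν (closedBall x r)
      ≤ ENNReal.ofReal (M * r ^ (-η)) * μ (closedBall x (2 * r)) := hν x hxA r ⟨hr, hr_r₀⟩
    _ ≤ ENNReal.ofReal (M * r ^ (-η)) * μ (ball x (3 * r)) := by
      gcongr
      exact closedBall_subset_ball (by linarith)
    _ ≤ ENNReal.ofReal (M * r ^ (-η)) * ENNReal.ofReal ((3 * r) ^ (s + η)) := by
      gcongr
      exact hx _ ⟨by positivity, by linarith⟩
    _ = ENNReal.ofReal (M * 3 ^ (s + η) * r ^ (s : ℝ)) := by
      rw [← ENNReal.ofReal_mul (by positivity), Real.mul_rpow (by norm_num) hr.le,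
        Real.rpow_add hr, Real.rpow_neg hr.le]
      field_simp

end LocalDimension

section BranchingFamily

open PiNat Function
open scoped ENNReal Topology

variable {E : Type*}

theorem disjoint_cantorScheme_of_length_eq {β : Type*} {A : List β → Set E}
    (hanti : CantorScheme.Antitone A) (hdisj : CantorScheme.Disjoint A) :
    ∀ {l l' : List β}, l.length = l'.length → l ≠ l' → Disjoint (A l) (A l')
  | [], [], _, hne => absurd rfl hne
  | i :: l, j :: l', hlen, hne => by
    rcases eq_or_ne l l' with rfl | hne'
    · exact hdisj l fun hij => hne (hij ▸ rfl)
    · exact (disjoint_cantorScheme_of_length_eq hanti hdisj (Nat.succ_injective hlen) hne').mono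
        (hanti l i) (hanti l' j)

/-- The uniform Bernoulli measure on the sequences over an alphabet of `N` letters. -/
noncomputable def bernoulliSeq (N : ℕ) [NeZero N] : Measure (ℕ → Fin N) :=
  Measure.infinitePi fun _ => (PMF.uniformOfFintype (Fin N)).toMeasure

theorem bernoulliSeq_univ (N : ℕ) [NeZero N] : bernoulliSeq N univ = 1 := by
  simp [bernoulliSeq]

theorem bernoulliSeq_setOf_res_eq_le {N : ℕ} [NeZero N] (l : List (Fin N)) :
    bernoulliSeq N {ω | res ω l.length = l} ≤ (N : ℝ≥0∞)⁻¹ ^ l.length := by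
  rcases {ω : ℕ → Fin N | res ω l.length = l}.eq_empty_or_nonempty with hempty | ⟨ω, hω⟩
  · simp [hempty]
  · have hcyl : {ω' | res ω' l.length = l} = cylinder ω l.length := by
      rw [cylinder_eq_res, hω]
    rw [hcyl, cylinder_eq_pi, bernoulliSeq,
      Measure.infinitePi_pi _ fun _ _ => measurableSet_singleton _]
    simp

theorem exists_measure_of_cantorScheme [PseudoMetricSpace E] [T2Space E] [MeasurableSpace E]
    [BorelSpace E] {N : ℕ} [NeZero N] {A : List (Fin N) → Set E} (hcompact : ∀ l, IsCompact (A l))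
    (hne : ∀ l, (A l).Nonempty) (hanti : CantorScheme.Antitone A)
    (hdiam : CantorScheme.VanishingDiam A) :
    ∃ ν : Measure E, ν {x | ∃ ω, ∀ n, x ∈ A (res ω n)} ≠ 0 ∧
      ∀ (n : ℕ) (B : Set E), MeasurableSet B → ∃ T : Finset (List (Fin N)),
        (∀ l ∈ T, l.length = n ∧ (A l ∩ B).Nonempty) ∧ ν B ≤ T.card * (N : ℝ≥0∞)⁻¹ ^ n := by
  have hdom : ∀ ω : ℕ → Fin N, ω ∈ (CantorScheme.inducedMap A).1 := fun ω =>
    IsCompact.nonempty_iInter_of_sequence_nonempty_isCompact_isClosed _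
      (fun n => hanti (res ω n) (ω n)) (fun _ => hne _) (hcompact _)
      (fun _ => (hcompact _).isClosed)
  set p : (ℕ → Fin N) → E := fun ω => (CantorScheme.inducedMap A).2 ⟨ω, hdom ω⟩
  have hp : ∀ ω n, p ω ∈ A (res ω n) := fun ω => CantorScheme.map_mem ⟨ω, hdom ω⟩
  have hmeas : Measurable p :=
    (hdiam.map_continuous.comp (continuous_id.subtype_mk hdom)).measurable
  refine ⟨(bernoulliSeq N).map p, fun hzero => ?_, fun n B hB => ?_⟩
  · have hpre : p ⁻¹' {x | ∃ ω, ∀ n, x ∈ A (res ω n)} = univ :=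
      eq_univ_of_forall fun ω => ⟨ω, hp ω⟩
    have hle := Measure.le_map_apply hmeas.aemeasurable (μ := bernoulliSeq N)
      {x | ∃ ω, ∀ n, x ∈ A (res ω n)}
    rw [hpre, hzero, bernoulliSeq_univ] at hle
    exact one_ne_zero (le_zero_iff.1 hle)
  · classical
    set T : Finset (List (Fin N)) :=
      (List.finite_length_eq (Fin N) n).toFinset.filter fun l => (A l ∩ B).Nonempty
    have hT : ∀ l ∈ T, l.length = n ∧ (A l ∩ B).Nonempty := fun l hl => by simpa [T] using hl
    have hcover : p ⁻¹' B ⊆ ⋃ l ∈ T, {ω | res ω l.length = l} := fun ω hω =>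
      mem_biUnion (x := res ω n)
        (by simpa [T] using ⟨p ω, hp ω n, hω⟩) (by simp)
    refine ⟨T, hT, ?_⟩
    calc (bernoulliSeq N).map p B
        = bernoulliSeq N (p ⁻¹' B) := Measure.map_apply hmeas hB
      _ ≤ ∑ l ∈ T, bernoulliSeq N {ω | res ω l.length = l} :=
        (measure_mono hcover).trans (measure_biUnion_finset_le _ _)
      _ ≤ ∑ _ ∈ T, (N : ℝ≥0∞)⁻¹ ^ n := Finset.sum_le_sum fun l hl =>
        (bernoulliSeq_setOf_res_eq_le l).trans_eq (by rw [(hT l hl).1])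
      _ = T.card * (N : ℝ≥0∞)⁻¹ ^ n := by simp

theorem card_mul_le_measure_closedBall [PseudoMetricSpace E] [MeasurableSpace E]
    {ι : Type*} {μ : Measure E} {A : ι → Set E} {T : Finset ι} {m : ℝ≥0∞} {x : E} {r : ℝ}
    (hmeas : ∀ i ∈ T, MeasurableSet (A i)) (hdisj : (T : Set ι).PairwiseDisjoint A)
    (hmass : ∀ i ∈ T, m ≤ μ (A i)) (hbdd : ∀ i ∈ T, Bornology.IsBounded (A i))
    (hdiam : ∀ i ∈ T, diam (A i) ≤ r) (hmeet : ∀ i ∈ T, (A i ∩ closedBall x r).Nonempty) :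
    T.card * m ≤ μ (closedBall x (2 * r)) := by
  have hsub : ⋃ i ∈ T, A i ⊆ closedBall x (2 * r) := by
    refine iUnion₂_subset fun i hi y hy => ?_
    obtain ⟨z, hz, hzx⟩ := hmeet i hi
    calc dist y x ≤ dist y z + dist z x := dist_triangle y z x
      _ ≤ r + r :=
        add_le_add ((dist_le_diam_of_mem (hbdd i hi) hy hz).trans (hdiam i hi)) hzx
      _ = 2 * r := (two_mul r).symm
  calc T.card * m ≤ ∑ i ∈ T, μ (A i) := by
        simpa using Finset.card_nsmul_le_sum T (fun i => μ (A i)) m hmass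
    _ = μ (⋃ i ∈ T, A i) := (measure_biUnion_finset hdisj hmeas).symm
    _ ≤ μ (closedBall x (2 * r)) := measure_mono hsub

theorem exists_measure_closedBall_mul_le_of_cantorScheme [MetricSpace E] [MeasurableSpace E]
    [BorelSpace E] (μ : Measure E) {N : ℕ} [NeZero N] {A : List (Fin N) → Set E}
    (hcompact : ∀ l, IsCompact (A l)) (hne : ∀ l, (A l).Nonempty)
    (hanti : CantorScheme.Antitone A) (hdisj : CantorScheme.Disjoint A)
    (hdiam : CantorScheme.VanishingDiam A) :
    ∃ ν : Measure E, ν {x | ∃ ω, ∀ n, x ∈ A (res ω n)} ≠ 0 ∧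
      ∀ (n : ℕ) (m : ℝ≥0∞) (x : E) (r : ℝ),
        (∀ l, l.length = n → m ≤ μ (A l) ∧ diam (A l) ≤ r) →
          m * ν (closedBall x r) ≤ (N : ℝ≥0∞)⁻¹ ^ n * μ (closedBall x (2 * r)) := by
  obtain ⟨ν, hν, hνle⟩ := exists_measure_of_cantorScheme hcompact hne hanti hdiam
  refine ⟨ν, hν, fun n m x r hA => ?_⟩
  obtain ⟨T, hT, hνT⟩ := hνle n (closedBall x r) measurableSet_closedBall
  have hTμ : T.card * m ≤ μ (closedBall x (2 * r)) :=
    card_mul_le_measure_closedBall (A := A) (fun l _ => (hcompact l).measurableSet)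
      (fun l hl l' hl' => disjoint_cantorScheme_of_length_eq hanti hdisj
        ((hT l hl).1.trans (hT l' hl').1.symm))
      (fun l hl => (hA l (hT l hl).1).1) (fun l _ => (hcompact l).isBounded)
      (fun l hl => (hA l (hT l hl).1).2) fun l hl => (hT l hl).2
  calc m * ν (closedBall x r) ≤ m * (T.card * (N : ℝ≥0∞)⁻¹ ^ n) := by gcongr
    _ = (N : ℝ≥0∞)⁻¹ ^ n * (T.card * m) := by ring
    _ ≤ (N : ℝ≥0∞)⁻¹ ^ n * μ (closedBall x (2 * r)) := by gcongr

/-- Every member of the `n`-th generation of `𝒱` contains `N` pairwise disjoint members of the next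
generation that avoid `S n`: a one-step form of the treelike collections used to build Cantor
sets, in which `S n` is removed at step `n`. -/
def IsBranching (𝒱 : ℕ → Set (Set E)) (S : ℕ → Set E) (N : ℕ) : Prop :=
  ∀ n, ∀ V ∈ 𝒱 n, ∃ W : Fin N → Set E,
    (∀ i, W i ∈ 𝒱 (n + 1) ∧ W i ⊆ V \ S n) ∧ Pairwise (Disjoint on W)

theorem IsBranching.exists_cantorScheme {𝒱 : ℕ → Set (Set E)} {S : ℕ → Set E} {N : ℕ}
    (h : IsBranching 𝒱 S N) {V₀ : Set E} (hV₀ : V₀ ∈ 𝒱 0) :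
    ∃ A : List (Fin N) → Set E, A [] = V₀ ∧ (∀ l, A l ∈ 𝒱 l.length) ∧
      (∀ l i, A (i :: l) ⊆ A l \ S l.length) ∧ CantorScheme.Disjoint A := by
  choose! W hW hdisj using h
  let A : List (Fin N) → Set E := fun l => l.rec V₀ fun i l V => W l.length V i
  have hA : ∀ l, A l ∈ 𝒱 l.length := fun l => by
    induction l with
    | nil => exact hV₀
    | cons i l ih => exact (hW _ _ ih i).1
  exact ⟨A, rfl, hA, fun l i => (hW _ _ (hA l) i).2, fun l => hdisj _ _ (hA l)⟩

theorem le_ofReal_rpow_neg_mul {v w : ℝ≥0∞} {N n : ℕ} {a θ ρ q η : ℝ} (ha : 0 < a) (hθ : 0 < θ)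
    (hρ : 0 < ρ) (hη : 0 ≤ η) (hN : ρ ^ η ≤ N * θ) (hq : 0 < q) (hqρ : q ≤ ρ ^ n)
    (hvw : ENNReal.ofReal (a * θ ^ n) * v ≤ (N : ℝ≥0∞)⁻¹ ^ n * w) :
    v ≤ ENNReal.ofReal (a⁻¹ * q ^ (-η)) * w := by
  have hNpos : (0 : ℝ) < N := pos_of_mul_pos_left ((Real.rpow_pos_of_pos hρ η).trans_le hN) hθ.le
  have hbound : (a * θ ^ n)⁻¹ * (N : ℝ)⁻¹ ^ n ≤ a⁻¹ * q ^ (-η) :=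
    calc (a * θ ^ n)⁻¹ * (N : ℝ)⁻¹ ^ n = a⁻¹ * ((N * θ) ^ n)⁻¹ := by
          rw [mul_pow, inv_pow, mul_inv, mul_inv]; ring
      _ ≤ a⁻¹ * ((ρ ^ η) ^ n)⁻¹ := by gcongr
      _ = a⁻¹ * (ρ ^ n) ^ (-η) := by
        rw [Real.rpow_neg (by positivity), Real.rpow_pow_comm hρ.le]
      _ ≤ a⁻¹ * q ^ (-η) := mul_le_mul_of_nonneg_left
        (Real.rpow_le_rpow_of_nonpos hq hqρ (neg_nonpos.2 hη)) (by positivity)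
  have hA : 0 < a * θ ^ n := by positivity
  calc v = (ENNReal.ofReal (a * θ ^ n))⁻¹ * (ENNReal.ofReal (a * θ ^ n) * v) :=
        (ENNReal.inv_mul_cancel_left (by simpa using hA) ENNReal.ofReal_ne_top).symm
    _ ≤ (ENNReal.ofReal (a * θ ^ n))⁻¹ * ((N : ℝ≥0∞)⁻¹ ^ n * w) := by gcongr
    _ = ENNReal.ofReal ((a * θ ^ n)⁻¹ * (N : ℝ)⁻¹ ^ n) * w := by
      rw [ENNReal.ofReal_mul (inv_nonneg.2 hA.le), ENNReal.ofReal_inv_of_pos hA,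
        ENNReal.ofReal_pow (by positivity), ENNReal.ofReal_inv_of_pos hNpos,
        ENNReal.ofReal_natCast, mul_assoc]
    _ ≤ ENNReal.ofReal (a⁻¹ * q ^ (-η)) * w := by gcongr

theorem vanishingDiam_of_diam_le [PseudoMetricSpace E] {β : Type*} {A : List β → Set E} {D ρ : ℝ}
    (hρ : 0 ≤ ρ) (hρ1 : ρ < 1) (hbdd : ∀ l, Bornology.IsBounded (A l))
    (hdiam : ∀ l, diam (A l) ≤ D * ρ ^ l.length) : CantorScheme.VanishingDiam A := by
  intro ω
  have hlim : Tendsto (fun n => ENNReal.ofReal (D * ρ ^ n)) atTop (𝓝 0) := by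
    simpa using ENNReal.tendsto_ofReal
      ((tendsto_pow_atTop_nhds_zero_of_lt_one hρ hρ1).const_mul D)
  refine tendsto_of_tendsto_of_tendsto_of_le_of_le tendsto_const_nhds hlim
    (fun _ => zero_le) fun n => ?_
  rw [← ENNReal.ofReal_toReal (hbdd (res ω n)).ediam_ne_top]
  exact ENNReal.ofReal_le_ofReal ((hdiam _).trans_eq (by rw [res_length]))

theorem IsBranching.exists_measure_closedBall_le [MetricSpace E] [MeasurableSpace E] [BorelSpace E]
    {μ : Measure E} {𝒱 : ℕ → Set (Set E)} {S : ℕ → Set E} {N : ℕ} (h : IsBranching 𝒱 S N)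
    {a θ D ρ η : ℝ} (ha : 0 < a) (hθ : 0 < θ) (hρ : 0 < ρ) (hρ1 : ρ < 1)
    (hη : 0 ≤ η) (hN : ρ ^ η ≤ N * θ) (hcompact : ∀ n, ∀ V ∈ 𝒱 n, IsCompact V)
    (hmass : ∀ n, ∀ V ∈ 𝒱 n, ENNReal.ofReal (a * θ ^ n) ≤ μ V)
    (hdiam : ∀ n, ∀ V ∈ 𝒱 n, diam V ≤ D * ρ ^ n) {V₀ : Set E} (hV₀ : V₀ ∈ 𝒱 0) :
    ∃ ν : Measure E, ν (V₀ \ ⋃ n, S n) ≠ 0 ∧ ∀ x, ∀ r ∈ Ioo 0 D,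
      ν (closedBall x r) ≤
        ENNReal.ofReal (a⁻¹ * (ρ * (r / D)) ^ (-η)) * μ (closedBall x (2 * r)) := by
  obtain ⟨A, hA₀, hA𝒱, hAS, hdisj⟩ := h.exists_cantorScheme hV₀
  have hNpos : (0 : ℝ) < N := pos_of_mul_pos_left ((Real.rpow_pos_of_pos hρ η).trans_le hN) hθ.le
  have : NeZero N := ⟨by exact_mod_cast hNpos.ne'⟩
  have hanti : CantorScheme.Antitone A := fun l i => (hAS l i).trans sdiff_subset
  have hAcompact : ∀ l, IsCompact (A l) := fun l => hcompact _ _ (hA𝒱 l)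
  have hAne : ∀ l, (A l).Nonempty := fun l => nonempty_of_measure_ne_zero <|
    ((ENNReal.ofReal_pos.2 (by positivity)).trans_le (hmass _ _ (hA𝒱 l))).ne'
  obtain ⟨ν, hν, hνle⟩ := exists_measure_closedBall_mul_le_of_cantorScheme μ hAcompact hAne hanti
    hdisj (vanishingDiam_of_diam_le hρ.le hρ1 (fun l => (hAcompact l).isBounded)
      fun l => hdiam _ _ (hA𝒱 l))
  refine ⟨ν, fun hzero => hν (measure_mono_null ?_ hzero), fun x r ⟨hr, hrD⟩ => ?_⟩
  · rintro x ⟨ω, hω⟩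
    refine ⟨hA₀ ▸ hω 0, mem_iUnion.not.2 fun ⟨n, hn⟩ => ?_⟩
    exact (hAS (res ω n) (ω n) (hω (n + 1))).2 (by rwa [res_length])
  · have hD : 0 < D := hr.trans hrD
    obtain ⟨k, hkr, hrk⟩ := exists_nat_pow_near_of_lt_one (div_pos hr hD)
      ((div_lt_one hD).2 hrD).le hρ hρ1
    have hDr : D * ρ ^ (k + 1) ≤ r := ((lt_div_iff₀' hD).1 hkr).le
    refine le_ofReal_rpow_neg_mul ha hθ hρ hη hN (n := k + 1) (by positivity)
      (by rw [pow_succ']; gcongr) (hνle _ _ x r fun l hl => ⟨?_, ?_⟩)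
    · exact hl ▸ hmass _ _ (hA𝒱 l)
    · exact (hdiam _ _ (hA𝒱 l)).trans (hl ▸ hDr)

end BranchingFamily

section FormalBalls

open Function
open scoped ENNReal NNReal

variable {E Λ : Type*}

/-- The formal ball `ψ(x, t)` in `X`, for `ψ` in the role of the monotonic function `ψ̄`. -/
def formalBall (X : Set E) (ψ : E → ℝ → Set E) (x : E) (t : ℝ) : Set E :=
  ψ x t ∩ X

/-- The neighbourhood `ψ̄(Y, t)` of a set `Y`, the union of the sets `ψ̄(y, t)` with `y ∈ Y`. -/
def formalNhd (ψ : E → ℝ → Set E) (Y : Set E) (t : ℝ) : Set E :=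
  ⋃ y ∈ Y, ψ y t

/-- The monotonicity of `ψ̄` in the time variable, required only at times above `tstar`. -/
def IsMonotonic (ψ : E → ℝ → Set E) (tstar : EReal) : Prop :=
  ∀ (x : E) (t s : ℝ), tstar < (t : EReal) → 0 ≤ s → ψ x (t + s) ⊆ ψ x t

/-- The union `R(t)` of the resonant sets of size at most `t`. -/
def resonantUnion (R : Λ → Set E) (sz : Λ → ℝ) (t : ℝ) : Set E :=
  ⋃ lam : Λ, ⋃ (_ : sz lam ≤ t), R lam

/-- The set `R(r, b)` of points that become resonant between the times `r - b` and `r`. -/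
def resonantAnnulus (R : Λ → Set E) (sz : Λ → ℝ) (r b : ℝ) : Set E :=
  resonantUnion R sz r \ resonantUnion R sz (r - b)

/-- The set `Bad(F)` of points of `X` which, for some constant `c`, avoid the neighbourhoods
`ψ̄(R_λ, s_λ + c)` of all resonant sets. -/
def badlyApproximable (X : Set E) (ψ : E → ℝ → Set E) (R : Λ → Set E) (sz : Λ → ℝ) : Set E :=
  {x ∈ X | ∃ c : ℝ, ∀ lam : Λ, x ∉ formalNhd ψ (R lam) (sz lam + c)}

/-- The `d`-separating property of `(Ω, ψ)` with respect to the family `(R, sz)`. -/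
structure IsSeparating (X : Set E) (ψ : E → ℝ → Set E) (tstar : EReal) (R : Λ → Set E)
    (sz : Λ → ℝ) (d : ℝ) : Prop where
  disjoint : ∀ Y : Set E, ((∃ y ∈ X, Y = {y}) ∨ ∃ r b : ℝ, Y = resonantAnnulus R sz r b) →
    ∀ t : ℝ, tstar < (t : EReal) → ∀ x ∈ X, x ∉ formalNhd ψ Y t →
      Disjoint (formalBall X ψ x (t + d)) (formalNhd ψ Y (t + d))
  subset : ∀ x ∈ X, ∀ y ∈ X, ∀ t : ℝ, tstar < (t : EReal) →
    x ∈ formalBall X ψ y (t + d) → formalBall X ψ x (t + d) ⊆ formalBall X ψ y t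

/-- The power law of exponent `τ`: the measure of a formal ball at time `t` is comparable to
`exp (-τ * t)`. -/
def HasPowerLaw [MeasurableSpace E] (X : Set E) (ψ : E → ℝ → Set E) (tstar : EReal)
    (μ : Measure E) (τ c₁ c₂ : ℝ) : Prop :=
  ∀ x ∈ X, ∀ t : ℝ, tstar < (t : EReal) →
    ENNReal.ofReal (c₁ * Real.exp (-τ * t)) ≤ μ (formalBall X ψ x t) ∧
      μ (formalBall X ψ x t) ≤ ENNReal.ofReal (c₂ * Real.exp (-τ * t))

/-- The decay of `(Ω, ψ, μ)` at the scale `b`: the neighbourhoods `ψ̄(R(r, b + d), r + b - 2d)` take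
up at most the proportion `c` of every formal ball at time `r`. -/
def IsDecayingAt [MeasurableSpace E] (X : Set E) (ψ : E → ℝ → Set E) (tstar : EReal)
    (R : Λ → Set E) (sz : Λ → ℝ) (μ : Measure E) (d : ℝ) (c : ℝ≥0) (b : ℝ) : Prop :=
  ∀ x ∈ X, ∀ r : ℝ, tstar < (r : EReal) →
    μ (formalBall X ψ x r ∩ formalNhd ψ (resonantAnnulus R sz r (b + d)) (r + (b - 2 * d))) ≤
      c * μ (formalBall X ψ x r)

variable {X : Set E} {ψ : E → ℝ → Set E} {tstar : EReal} {R : Λ → Set E} {sz : Λ → ℝ}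

theorem lt_coe_of_le {t u : ℝ} (ht : tstar < (t : EReal)) (htu : t ≤ u) :
    tstar < (u : EReal) :=
  ht.trans_le (EReal.coe_le_coe_iff.2 htu)

theorem IsMonotonic.subset (hmono : IsMonotonic ψ tstar) (x : E) {t u : ℝ}
    (ht : tstar < (t : EReal)) (htu : t ≤ u) : ψ x u ⊆ ψ x t := by
  simpa using hmono x t (u - t) ht (sub_nonneg.2 htu)

theorem bddBelow_range_of_finite_setOf_le {α : Type*} [LinearOrder α] {f : Λ → α} {a : α}
    (h : {i | f i ≤ a}.Finite) : BddBelow (range f) := by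
  have : Nonempty α := ⟨a⟩
  refine ((h.image f).bddBelow.union bddBelow_Ici).mono (t := f '' {i | f i ≤ a} ∪ Ici a) ?_
  rintro _ ⟨i, rfl⟩
  exact (le_total (f i) a).imp (fun hi => ⟨i, hi, rfl⟩) id

theorem exists_mem_resonantAnnulus {d b t₀ : ℝ} (hd : 0 ≤ d) (hb : 0 < b)
    (ht₀ : ∀ lam, t₀ - b < sz lam) {lam : Λ} {y : E} (hy : y ∈ R lam) :
    ∃ n : ℕ, y ∈ resonantAnnulus R sz (t₀ + n * b + d) (b + d) ∧ t₀ + n * b - b < sz lam := by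
  classical
  have hex : ∃ n : ℕ, ∃ l, sz l ≤ t₀ + n * b ∧ y ∈ R l := by
    obtain ⟨n, hn⟩ := exists_nat_ge ((sz lam - t₀) / b)
    rw [div_le_iff₀ hb] at hn
    exact ⟨n, lam, by linarith, hy⟩
  obtain ⟨n, ⟨l, hl, hyl⟩, hmin⟩ : ∃ n : ℕ, (∃ l, sz l ≤ t₀ + n * b ∧ y ∈ R l) ∧
      ∀ k < n, ¬ ∃ l, sz l ≤ t₀ + k * b ∧ y ∈ R l :=
    ⟨Nat.find hex, Nat.find_spec hex, fun _ => Nat.find_min hex⟩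
  have hlate : ∀ l', y ∈ R l' → t₀ + n * b - b < sz l' := by
    intro l' hyl'
    cases n with
    | zero => simpa using ht₀ l'
    | succ k =>
      by_contra! hle
      push_cast at hle
      exact hmin k k.lt_succ_self ⟨l', by linarith, hyl'⟩
  refine ⟨n, ⟨mem_iUnion₂.2 ⟨l, by linarith, hyl⟩, fun hmem => ?_⟩, hlate lam hy⟩
  obtain ⟨l', hl', hyl'⟩ := mem_iUnion₂.1 hmem
  linarith [hlate l' hyl']

theorem IsMonotonic.notMem_formalNhd_of_forall_resonantAnnulus (hmono : IsMonotonic ψ tstar)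
    {d b t₀ : ℝ} (hd : 0 ≤ d) (hb : 0 < b) (htstar : tstar < (t₀ : EReal))
    (ht₀ : ∀ lam, t₀ - b < sz lam) {x : E}
    (hx : ∀ n : ℕ, x ∉ formalNhd ψ (resonantAnnulus R sz (t₀ + n * b + d) (b + d))
      (t₀ + n * b + b)) (lam : Λ) :
    x ∉ formalNhd ψ (R lam) (sz lam + 2 * b) := by
  intro hmem
  obtain ⟨y, hy, hxy⟩ := mem_iUnion₂.1 hmem
  obtain ⟨n, hyn, hn⟩ := exists_mem_resonantAnnulus hd hb ht₀ hy
  have hnb : 0 ≤ n * b := by positivity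
  exact hx n (mem_iUnion₂.2
    ⟨y, hyn, hmono.subset y (lt_coe_of_le htstar (by linarith)) (by linarith) hxy⟩)

theorem exists_fin_notMem_of_measure_lt [MeasurableSpace E] {μ : Measure E} {G : Set E}
    {V : E → Set E} {v : ℝ≥0∞} (hv : ∀ y ∈ G, μ (V y) ≤ v) :
    ∀ {N : ℕ}, N * v < μ G →
      ∃ y : Fin N → E, (∀ i, y i ∈ G) ∧ ∀ i j, i < j → y j ∉ V (y i)
  | 0, _ => ⟨Fin.elim0, fun i => i.elim0, fun i => i.elim0⟩
  | N + 1, hN => by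
    have hNlt : N * v < μ G := lt_of_le_of_lt (by gcongr; exact N.le_succ) hN
    obtain ⟨y, hyG, hyV⟩ := exists_fin_notMem_of_measure_lt hv hNlt
    have hcover : μ (⋃ i, V (y i)) < μ G :=
      calc μ (⋃ i, V (y i)) ≤ ∑ i, μ (V (y i)) := measure_iUnion_fintype_le _ _
        _ ≤ ∑ _ : Fin N, v := Finset.sum_le_sum fun i _ => hv _ (hyG i)
        _ = N * v := by simp
        _ < μ G := hNlt
    obtain ⟨z, hzG, hzV⟩ := not_subset.1 fun hsub => hcover.not_ge (measure_mono hsub)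
    refine ⟨Fin.snoc y z, Fin.lastCases (by simpa using hzG) (by simpa using hyG), ?_⟩
    refine fun i j => Fin.lastCases (fun hij => ?_) (fun j hij => ?_) j
    · obtain ⟨i, rfl⟩ := Fin.exists_castSucc_eq.2 hij.ne
      simpa using fun hz => hzV (mem_iUnion.2 ⟨i, hz⟩)
    · obtain ⟨i, rfl⟩ := Fin.exists_castSucc_eq.2 (hij.trans (Fin.castSucc_lt_last j)).ne
      simpa using hyV i j (by simpa using hij)

theorem IsSeparating.disjoint_formalBall {d : ℝ} (hsep : IsSeparating X ψ tstar R sz d) {x y : E}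
    (hx : x ∈ X) (hy : y ∈ X) {t : ℝ} (ht : tstar < (t : EReal)) (hxy : x ∉ formalBall X ψ y t) :
    Disjoint (formalBall X ψ x (t + d)) (formalBall X ψ y (t + d)) := by
  have hdisj := hsep.disjoint {y} (Or.inl ⟨y, hy, rfl⟩) t ht x hx
  simp only [formalNhd, biUnion_singleton] at hdisj
  exact (hdisj fun hmem => hxy ⟨hmem, hx⟩).mono_right inter_subset_left

theorem IsSeparating.exists_disjoint_formalBall [MeasurableSpace E] {μ : Measure E} {d : ℝ}
    (hsep : IsSeparating X ψ tstar R sz d) (hmono : IsMonotonic ψ tstar) (hd : 0 ≤ d)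
    {b r q t : ℝ} (hb : 2 * d ≤ b) (ht : tstar < (t : EReal)) {x : E} (hx : x ∈ X) {N : ℕ}
    {v : ℝ≥0∞} (hv : ∀ y ∈ X, μ (formalBall X ψ y (t + (b - d))) ≤ v)
    (hN : N * v < μ (formalBall X ψ x (t + d) \
      formalNhd ψ (resonantAnnulus R sz r q) (t + (b - d)))) :
    ∃ y : Fin N → E, (∀ i, y i ∈ X ∧ formalBall X ψ (y i) (t + b) ⊆
        formalBall X ψ x t \ formalNhd ψ (resonantAnnulus R sz r q) (t + b)) ∧
      Pairwise (Disjoint on fun i => formalBall X ψ (y i) (t + b)) := by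
  have hu : tstar < ((t + (b - d) : ℝ) : EReal) := lt_coe_of_le ht (by linarith)
  have hub : t + (b - d) + d = t + b := by ring
  obtain ⟨y, hyG, hy⟩ := exists_fin_notMem_of_measure_lt (fun y hy => hv y hy.1.2) hN
  have hyX : ∀ i, y i ∈ X := fun i => (hyG i).1.2
  refine ⟨y, fun i => ⟨hyX i, subset_sdiff.2 ⟨?_, ?_⟩⟩, ?_⟩
  · calc formalBall X ψ (y i) (t + b) ⊆ formalBall X ψ (y i) (t + d) :=
        inter_subset_inter_left _
          (hmono.subset (y i) (lt_coe_of_le ht (by linarith)) (by linarith))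
      _ ⊆ formalBall X ψ x t := hsep.subset _ (hyX i) _ hx t ht (hyG i).1
  · simpa only [hub] using hsep.disjoint _ (Or.inr ⟨r, q, rfl⟩) _ hu _ (hyX i) (hyG i).2
  · refine (pairwise_disjoint_on _).2 fun i j hij => ?_
    simpa only [hub] using (hsep.disjoint_formalBall (hyX j) (hyX i) hu (hy i j hij)).symm

theorem one_sub_mul_le_measure_sdiff [MeasurableSpace E] {μ : Measure E} {A S : Set E} {c : ℝ≥0∞}
    (hA : μ A ≠ ∞) (h : μ (A ∩ S) ≤ c * μ A) : (1 - c) * μ A ≤ μ (A \ S) := by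
  rw [ENNReal.sub_mul fun _ _ => hA, one_mul, tsub_le_iff_left]
  exact (measure_le_inter_add_sdiff μ A S).trans (by gcongr)

theorem HasPowerLaw.natCast_mul_lt_measure_sdiff [MeasurableSpace E] {μ : Measure E}
    {τ c₁ c₂ : ℝ} (hpow : HasPowerLaw X ψ tstar μ τ c₁ c₂) (hc₁ : 0 ≤ c₁) (hc₂ : 0 ≤ c₂)
    {c : ℝ≥0} {N : ℕ} {x : E} (hx : x ∈ X) {t u : ℝ} (ht : tstar < (t : EReal)) {S : Set E}
    (hS : μ (formalBall X ψ x t ∩ S) ≤ c * μ (formalBall X ψ x t))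
    (hN : N * (c₂ * Real.exp (-τ * u)) < (1 - c) * (c₁ * Real.exp (-τ * t))) :
    N * ENNReal.ofReal (c₂ * Real.exp (-τ * u)) < μ (formalBall X ψ x t \ S) := by
  obtain ⟨hlower, hupper⟩ := hpow x hx t ht
  calc N * ENNReal.ofReal (c₂ * Real.exp (-τ * u))
      = ENNReal.ofReal (N * (c₂ * Real.exp (-τ * u))) := by
        rw [ENNReal.ofReal_mul N.cast_nonneg, ENNReal.ofReal_natCast]
    _ < ENNReal.ofReal ((1 - c) * (c₁ * Real.exp (-τ * t))) :=
      (ENNReal.ofReal_lt_ofReal_iff_of_nonneg (by positivity)).2 hN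
    _ = (1 - c) * ENNReal.ofReal (c₁ * Real.exp (-τ * t)) := by
      rw [ENNReal.ofReal_mul' (by positivity), ENNReal.ofReal_sub _ c.coe_nonneg,
        ENNReal.ofReal_one, ENNReal.ofReal_coe_nnreal]
    _ ≤ (1 - c) * μ (formalBall X ψ x t) := by gcongr
    _ ≤ μ (formalBall X ψ x t \ S) :=
      one_sub_mul_le_measure_sdiff (hupper.trans_lt ENNReal.ofReal_lt_top).ne hS

theorem eventually_exists_nat_exp_le_lt {τ ε κ : ℝ} (hτ : 0 < τ) (hε : 0 < ε) (hκ : 0 < κ) :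
    ∀ᶠ b : ℝ in atTop, ∃ N : ℕ,
      Real.exp ((τ - ε) * b) ≤ N ∧ N < κ * Real.exp (τ * b) := by
  have hexp : ∀ {ρ : ℝ}, 0 < ρ → Tendsto (fun b : ℝ => Real.exp (ρ * b)) atTop atTop :=
    fun hρ => Real.tendsto_exp_atTop.comp (tendsto_id.const_mul_atTop hρ)
  filter_upwards [(hexp hε).eventually_ge_atTop (2 / κ), (hexp hτ).eventually_gt_atTop (2 / κ)]
    with b hεb hτb
  rw [div_le_iff₀' hκ] at hεb
  rw [div_lt_iff₀' hκ] at hτb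
  refine ⟨⌈Real.exp ((τ - ε) * b)⌉₊, Nat.le_ceil _, ?_⟩
  have hsplit : Real.exp ((τ - ε) * b) * Real.exp (ε * b) = Real.exp (τ * b) := by
    rw [← Real.exp_add]; ring_nf
  have hhalf : 2 * Real.exp ((τ - ε) * b) ≤ κ * Real.exp (τ * b) := by
    rw [← hsplit]
    nlinarith [Real.exp_pos ((τ - ε) * b)]
  linarith [Nat.ceil_lt_add_one (Real.exp_nonneg ((τ - ε) * b))]

/-- The formal balls `ψ(x, t)` with centre `x` in `X`, at a fixed time `t`. -/
def formalBallsAt (X : Set E) (ψ : E → ℝ → Set E) (t : ℝ) : Set (Set E) :=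
  (fun x => formalBall X ψ x t) '' X

theorem IsSeparating.isBranching_formalBallsAt [MeasurableSpace E] {μ : Measure E} {d : ℝ}
    (hsep : IsSeparating X ψ tstar R sz d) (hmono : IsMonotonic ψ tstar) (hd : 0 ≤ d)
    {τ c₁ c₂ : ℝ} (hpow : HasPowerLaw X ψ tstar μ τ c₁ c₂) (hc₁ : 0 ≤ c₁) (hc₂ : 0 ≤ c₂)
    {b : ℝ} (hb : 2 * d ≤ b) {c : ℝ≥0} (hdecay : IsDecayingAt X ψ tstar R sz μ d c b)
    {t₀ : ℝ} (ht₀ : tstar < (t₀ : EReal)) {N : ℕ}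
    (hN : N * (c₂ * Real.exp (2 * τ * d)) < (1 - c) * c₁ * Real.exp (τ * b)) :
    IsBranching (fun n => formalBallsAt X ψ (t₀ + n * b))
      (fun n => formalNhd ψ (resonantAnnulus R sz (t₀ + n * b + d) (b + d)) (t₀ + n * b + b))
      N := by
  rintro n _ ⟨x, hx, rfl⟩
  set t : ℝ := t₀ + n * b
  have ht : tstar < (t : EReal) := by
    have hnb : 0 ≤ n * b := mul_nonneg n.cast_nonneg (by linarith)
    exact lt_coe_of_le ht₀ (by linarith)
  have htd : tstar < ((t + d : ℝ) : EReal) := lt_coe_of_le ht (by linarith)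
  have htb : t₀ + (n + 1 : ℕ) * b = t + b := by simp only [t]; push_cast; ring
  have hu : t + d + (b - 2 * d) = t + (b - d) := by ring
  have hNu : N * (c₂ * Real.exp (-τ * (t + (b - d)))) <
      (1 - c) * (c₁ * Real.exp (-τ * (t + d))) := by
    have hexp : 0 < Real.exp (-τ * (t + (b + d))) := Real.exp_pos _
    have hleft : -τ * (t + (b - d)) = 2 * τ * d + -τ * (t + (b + d)) := by ring
    have hright : -τ * (t + d) = τ * b + -τ * (t + (b + d)) := by ring
    rw [hleft, hright, Real.exp_add, Real.exp_add]
    linarith [mul_lt_mul_of_pos_right hN hexp]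
  have hS := hdecay x hx (t + d) htd
  rw [hu] at hS
  obtain ⟨y, hy, hdisj⟩ := hsep.exists_disjoint_formalBall hmono hd hb ht hx
    (fun y hy => (hpow y hy (t + (b - d)) (lt_coe_of_le ht (by linarith))).2)
    (hpow.natCast_mul_lt_measure_sdiff hc₁ hc₂ hx htd hS hNu)
  exact ⟨fun i => formalBall X ψ (y i) (t + b),
    fun i => ⟨⟨y i, (hy i).1, by simp only [htb]⟩, (hy i).2⟩, hdisj⟩

theorem IsBranching.exists_measure_formalBall_sdiff [MetricSpace E] [MeasurableSpace E]
    [BorelSpace E] {μ : Measure E} {t₀ b : ℝ} {S : ℕ → Set E} {N : ℕ}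
    (h : IsBranching (fun n => formalBallsAt X ψ (t₀ + n * b)) S N) (ht₀ : tstar < (t₀ : EReal))
    (hb : 0 < b)
    (hcompact : ∀ x ∈ X, ∀ t : ℝ, tstar < (t : EReal) → IsCompact (formalBall X ψ x t))
    {τ c₁ c₂ : ℝ} (hpow : HasPowerLaw X ψ tstar μ τ c₁ c₂) (hc₁ : 0 < c₁)
    {C σ : ℝ} (hC : 0 < C) (hσ : 0 < σ)
    (hdiam : ∀ x ∈ X, ∀ t : ℝ, tstar < (t : EReal) →
      diam (formalBall X ψ x t) ≤ C * Real.exp (-σ * t))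
    {η : ℝ} (hη : 0 ≤ η) (hN : Real.exp ((τ - σ * η) * b) ≤ N) {x₀ : E} (hx₀ : x₀ ∈ X) :
    ∃ ν : Measure E, ν (formalBall X ψ x₀ t₀ \ ⋃ n, S n) ≠ 0 ∧
      ∃ M ≥ 0, ∃ r₀ > 0, ∀ x, ∀ r ∈ Ioo 0 r₀,
        ν (closedBall x r) ≤ ENNReal.ofReal (M * r ^ (-η)) * μ (closedBall x (2 * r)) := by
  have htime : ∀ n : ℕ, tstar < ((t₀ + n * b : ℝ) : EReal) := fun n =>
    lt_coe_of_le ht₀ (le_add_of_nonneg_right (by positivity))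
  have hexp : ∀ (k ρ : ℝ) (n : ℕ), k * Real.exp (-ρ * (t₀ + n * b)) =
      k * Real.exp (-ρ * t₀) * Real.exp (-ρ * b) ^ n := fun k ρ n => by
    rw [← Real.exp_nat_mul, mul_assoc, ← Real.exp_add]; ring_nf
  have hratio : Real.exp (-σ * b) ^ η ≤ N * Real.exp (-τ * b) :=
    calc Real.exp (-σ * b) ^ η = Real.exp ((τ - σ * η) * b) * Real.exp (-τ * b) := by
          rw [← Real.exp_mul, ← Real.exp_add]; ring_nf
      _ ≤ N * Real.exp (-τ * b) := by gcongr
  set a : ℝ := c₁ * Real.exp (-τ * t₀)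
  set D : ℝ := C * Real.exp (-σ * t₀)
  set ρ : ℝ := Real.exp (-σ * b)
  have hρ : 0 < ρ := Real.exp_pos _
  have hρ1 : ρ < 1 := Real.exp_lt_one_iff.2 (by nlinarith)
  obtain ⟨ν, hν, hνle⟩ := h.exists_measure_closedBall_le (μ := μ) (a := a) (D := D)
    (by positivity) (Real.exp_pos _) hρ hρ1 hη hratio
    (by rintro n _ ⟨x, hx, rfl⟩; exact hcompact x hx _ (htime n))
    (by rintro n _ ⟨x, hx, rfl⟩; exact hexp c₁ τ n ▸ (hpow x hx _ (htime n)).1)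
    (by rintro n _ ⟨x, hx, rfl⟩; exact hexp C σ n ▸ hdiam x hx _ (htime n))
    ⟨x₀, hx₀, rfl⟩
  refine ⟨ν, by simpa using hν, a⁻¹ * (ρ / D) ^ (-η), by positivity, D, by positivity,
    fun x r hr => (hνle x r hr).trans_eq ?_⟩
  rw [mul_div_left_comm, mul_comm r, Real.mul_rpow (by positivity) hr.1.le, mul_assoc]

theorem IsSeparating.exists_measure_badlyApproximable [MetricSpace E] [MeasurableSpace E]
    [BorelSpace E] {μ : Measure E} {d : ℝ} (hsep : IsSeparating X ψ tstar R sz d)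
    (hmono : IsMonotonic ψ tstar) (hd : 0 ≤ d)
    (hcompact : ∀ x ∈ X, ∀ t : ℝ, tstar < (t : EReal) → IsCompact (formalBall X ψ x t))
    (hsz : BddBelow (range sz)) {τ c₁ c₂ : ℝ} (hpow : HasPowerLaw X ψ tstar μ τ c₁ c₂)
    (hτ : 0 < τ) (hc₁ : 0 < c₁) (hc₂ : 0 < c₂) {c : ℝ≥0} (hc : c < 1)
    (hdecay : ∀ᶠ b in atTop, IsDecayingAt X ψ tstar R sz μ d c b)
    {C σ : ℝ} (hC : 0 < C) (hσ : 0 < σ)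
    (hdiam : ∀ x ∈ X, ∀ t : ℝ, tstar < (t : EReal) →
      diam (formalBall X ψ x t) ≤ C * Real.exp (-σ * t))
    {x₀ : E} (hx₀ : x₀ ∈ X) {t₀ : ℝ} (ht₀ : tstar < (t₀ : EReal)) {η : ℝ} (hη : 0 < η) :
    ∃ ν : Measure E, ν (badlyApproximable X ψ R sz ∩ formalBall X ψ x₀ t₀) ≠ 0 ∧
      ∃ M ≥ 0, ∃ r₀ > 0, ∀ x, ∀ r ∈ Ioo 0 r₀,
        ν (closedBall x r) ≤ ENNReal.ofReal (M * r ^ (-η)) * μ (closedBall x (2 * r)) := by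
  obtain ⟨m, hm⟩ := hsz
  have hc' : (0 : ℝ) < 1 - c := sub_pos.2 (NNReal.coe_lt_one.2 hc)
  obtain ⟨b, hbdecay, ⟨N, hNlower, hNupper⟩, hbd, hb, hbm⟩ := (hdecay.and
    ((eventually_exists_nat_exp_le_lt (ε := σ * η)
      (κ := (1 - c) * c₁ / (c₂ * Real.exp (2 * τ * d))) hτ (by positivity) (by positivity)).and
    ((eventually_ge_atTop (2 * d)).and
      ((eventually_gt_atTop 0).and (eventually_gt_atTop (t₀ - m)))))).exists
  rw [div_mul_eq_mul_div, lt_div_iff₀ (by positivity)] at hNupper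
  obtain ⟨ν, hν, hνle⟩ := (hsep.isBranching_formalBallsAt hmono hd hpow hc₁.le hc₂.le hbd hbdecay
    ht₀ hNupper).exists_measure_formalBall_sdiff ht₀ hb hcompact hpow hc₁ hC hσ hdiam hη.le
    hNlower hx₀
  refine ⟨ν, fun hzero => hν (measure_mono_null (fun x ⟨hx₀, hxS⟩ => ?_) hzero), hνle⟩
  refine ⟨⟨hx₀.2, 2 * b, hmono.notMem_formalNhd_of_forall_resonantAnnulus hd hb ht₀
    (fun lam => ?_) fun n hn => hxS (mem_iUnion.2 ⟨n, hn⟩)⟩, hx₀⟩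
  linarith [hm (mem_range_self lam)]

theorem stmt7_general [MetricSpace E] [MeasurableSpace E] [BorelSpace E] {μ : Measure E}
    [IsLocallyFiniteMeasure μ] {d : ℝ} (hsep : IsSeparating X ψ tstar R sz d)
    (hmono : IsMonotonic ψ tstar) (hd : 0 ≤ d)
    (hcompact : ∀ x ∈ X, ∀ t : ℝ, tstar < (t : EReal) → IsCompact (formalBall X ψ x t))
    (hsz : BddBelow (range sz)) {τ c₁ c₂ : ℝ} (hpow : HasPowerLaw X ψ tstar μ τ c₁ c₂)
    (hτ : 0 < τ) (hc₁ : 0 < c₁) (hc₂ : 0 < c₂) {c : ℝ≥0} (hc : c < 1)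
    (hdecay : ∀ᶠ b in atTop, IsDecayingAt X ψ tstar R sz μ d c b)
    {C σ : ℝ} (hC : 0 < C) (hσ : 0 < σ)
    (hdiam : ∀ x ∈ X, ∀ t : ℝ, tstar < (t : EReal) →
      diam (formalBall X ψ x t) ≤ C * Real.exp (-σ * t))
    {U : Set E} (hU : ∃ x ∈ X, ∃ t : ℝ, tstar < (t : EReal) ∧ formalBall X ψ x t ⊆ U ∩ X) :
    ENNReal.ofReal (⨅ x : ↥(U ∩ X), lowerLocalDim μ x) ≤
      dimH (badlyApproximable X ψ R sz ∩ U) := by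
  obtain ⟨x₀, hx₀, t₀, ht₀, hU₀⟩ := hU
  set δ : ℝ := ⨅ x : ↥(U ∩ X), lowerLocalDim μ x
  refine ENNReal.le_of_forall_nnreal_lt fun s hs => ?_
  rw [ENNReal.lt_ofReal_iff_toReal_lt ENNReal.coe_ne_top, ENNReal.coe_toReal] at hs
  have hδ : 0 < δ := s.coe_nonneg.trans_lt hs
  have hδ_le : ∀ x ∈ U ∩ X, δ ≤ lowerLocalDim μ x := fun x hx =>
    ciInf_le (f := fun y : ↥(U ∩ X) => lowerLocalDim μ y)
      (not_not.1 fun hbdd => hδ.ne' (Real.iInf_of_not_bddBelow hbdd)) ⟨x, hx⟩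
  have hη : 0 < (δ - s) / 2 := by linarith
  obtain ⟨ν, hν, M, hM, r₀, hr₀, hνle⟩ := hsep.exists_measure_badlyApproximable hmono hd hcompact
    hsz hpow hτ hc₁ hc₂ hc hdecay hC hσ hdiam hx₀ ht₀ hη
  calc (s : ℝ≥0∞) ≤ dimH (badlyApproximable X ψ R sz ∩ formalBall X ψ x₀ t₀) :=
        le_dimH_of_measure_closedBall_le_rpow_neg_mul hν hM hη.le hr₀
          (fun x _ => hνle x) fun x hx => by linarith [hδ_le x (hU₀ hx.2)]
    _ ≤ dimH (badlyApproximable X ψ R sz ∩ U) :=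
      dimH_mono (inter_subset_inter_right _ (hU₀.trans inter_subset_left))

end FormalBalls

/-- Under the separating, power-law, `f`-decaying (with
`(d_*, b_*, 1, 0)`-decaying `f`) and (MSG1-2) assumptions, for every nonempty
open `U ⊆ X` the Hausdorff dimension of `Bad(F) ∩ U` is at least `d_μ(U)`. -/
theorem stmt7 {Xbar : Type*} [MetricSpace Xbar] [ProperSpace Xbar]
    [MeasurableSpace Xbar] [BorelSpace Xbar]
    (X : Set Xbar) (hXne : X.Nonempty) (hXcl : IsClosed X)
    (tstar : EReal)
    (ψ : Xbar → ℝ → Set Xbar)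
    (hψ : ∀ (x : Xbar) (t : ℝ), tstar < (t : EReal) →
      IsCompact (ψ x t) ∧ (ψ x t).Nonempty)
    (hψmono : ∀ (x : Xbar) (t s : ℝ), tstar < (t : EReal) → 0 ≤ s →
      ψ x (t + s) ⊆ ψ x t)
    {Λ : Type*} [Countable Λ]
    (R : Λ → Set Xbar) (sz : Λ → ℝ)
    (hsz : ∀ lam : Λ, tstar < (sz lam : EReal))
    (hnested : ∀ lam bet : Λ, sz lam ≤ sz bet → R lam ⊆ R bet)
    (hdiscrete : ∀ t : ℝ, {lam : Λ | sz lam ≤ t}.Finite)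
    -- the associated sets are Borel
    (hRBorel : ∀ r b t : ℝ, MeasurableSet
      (⋃ y ∈ ((⋃ lam : Λ, ⋃ (_ : sz lam ≤ r), R lam) \
               ⋃ lam : Λ, ⋃ (_ : sz lam ≤ r - b), R lam), ψ y t))
    (μ : Measure Xbar) [IsLocallyFiniteMeasure μ]
    -- μ has support X
    (hsupp : ∀ x : Xbar, x ∈ X ↔ ∀ ε : ℝ, 0 < ε → 0 < μ (ball x ε))
    (dstar bstar : ℝ) (hdstar : 0 ≤ dstar) (hbstar : 2 * dstar < bstar)
    -- (i) (Ω, ψ) is d_*-separating with respect to F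
    (hsepY : ∀ Y : Set Xbar,
      ((∃ y ∈ X, Y = {y}) ∨ (∃ r b : ℝ,
        Y = (⋃ lam : Λ, ⋃ (_ : sz lam ≤ r), R lam) \
              ⋃ lam : Λ, ⋃ (_ : sz lam ≤ r - b), R lam)) →
      ∀ t : ℝ, tstar < (t : EReal) → ∀ x ∈ X, x ∉ (⋃ y ∈ Y, ψ y t) →
        Disjoint (ψ x (t + dstar) ∩ X) (⋃ y ∈ Y, ψ y (t + dstar)))
    (hsep2 : ∀ x ∈ X, ∀ y ∈ X, ∀ t : ℝ, tstar < (t : EReal) →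
      x ∈ ψ y (t + dstar) ∩ X → ψ x (t + dstar) ∩ X ⊆ ψ y t ∩ X)
    -- (ii) power law
    (τ c₁ c₂ : ℝ) (hτ : 0 < τ) (hc₁ : 0 < c₁) (hc₂ : 0 < c₂)
    (hpow : ∀ x ∈ X, ∀ t : ℝ, tstar < (t : EReal) →
      ENNReal.ofReal (c₁ * Real.exp (-τ * t)) ≤ μ (ψ x t ∩ X) ∧
        μ (ψ x t ∩ X) ≤ ENNReal.ofReal (c₂ * Real.exp (-τ * t)))
    -- (iii) f-decaying for a (d_*, b_*, 1, 0)-decaying f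
    (f : ℝ → ℝ → ℝ)
    (hf0 : ∀ b s : ℝ, 0 ≤ b → 0 ≤ f b s)
    (hfmono : ∀ b₁ b₂ s : ℝ, 0 ≤ b₁ → b₁ ≤ b₂ → f b₁ s ≤ f b₂ s)
    (hfanti : ∀ b s₁ s₂ : ℝ, 0 ≤ b → s₁ ≤ s₂ → f b s₂ ≤ f b s₁)
    (hdecay : ∀ x ∈ X, ∀ r : ℝ, tstar < (r : EReal) → ∀ b : ℝ, 0 ≤ b → ∀ s : ℝ,
      μ ((ψ x r ∩ X) ∩
          ⋃ y ∈ ((⋃ lam : Λ, ⋃ (_ : sz lam ≤ r), R lam) \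
                  ⋃ lam : Λ, ⋃ (_ : sz lam ≤ r - b), R lam),
            ψ y (r + s)) ≤ ENNReal.ofReal (f b s) * μ (ψ x r ∩ X))
    (c₀ : ℝ) (hc₀ : c₀ < 1)
    (hfdec : ∀ b : ℝ, bstar < b → f (b + dstar) (b - 2 * dstar) ≤ c₀)
    -- (iv) MSG1 and MSG2
    (hMSG1 : ∀ U : Set Xbar, IsOpen U → (U ∩ X).Nonempty →
      ∃ x ∈ X, ∃ t : ℝ, tstar < (t : EReal) ∧ ψ x t ∩ X ⊆ U ∩ X)
    (C σ : ℝ) (hC : 0 < C) (hσ : 0 < σ)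
    (hMSG2 : ∀ x ∈ X, ∀ t : ℝ, tstar < (t : EReal) →
      Metric.diam (ψ x t ∩ X) ≤ C * Real.exp (-σ * t)) :
    -- conclusion: dim(Bad(F) ∩ U) ≥ d_μ(U)
    ∀ U : Set Xbar, IsOpen U → (U ∩ X).Nonempty →
      ENNReal.ofReal (⨅ x : ↥(U ∩ X),
          liminf (fun r : ℝ =>
              Real.log (μ (ball (x : Xbar) r)).toReal / Real.log r)
            (nhdsWithin 0 (Ioi 0)))
        ≤ dimH ({x ∈ X | ∃ c : ℝ, ∀ lam : Λ,
            x ∉ ⋃ y ∈ R lam, ψ y (sz lam + c)} ∩ U) := by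
  intro U hU hUX
  refine stmt7_general ⟨hsepY, hsep2⟩ hψmono hdstar
    (fun x _ t ht => (hψ x t ht).1.inter_right hXcl)
    (bddBelow_range_of_finite_setOf_le (hdiscrete 0)) hpow hτ hc₁ hc₂
    (Real.toNNReal_lt_one.2 hc₀) ((eventually_gt_atTop bstar).mono fun b hb x hx r hr => ?_)
    hC hσ hMSG2 (hMSG1 U hU hUX)
  exact (hdecay x hx r hr _ (by linarith) _).trans
    (mul_le_mul' (ENNReal.ofReal_le_ofReal (hfdec b hb)) le_rfl)
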